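/- Let G be a finite connected simple graph with edge set E and let w : E → ℝ≥0 be a weight function. Define the family I := {S ⊆ E : there exists a minimum spanning tree T of G under w with S ⊆ T}. Then I is the independence family of a matroid on ground set E; that is, ∅ ∈ I, I is downward closed (S ∈ I and T ⊆ S imply T ∈ I), and I satisfies the augmentation property: for all S₁, S₂ ∈ I with |S₁| > |S₂|, there exists an element e ∈ S₁ \ S₂ such that S₂ ∪ {e} ∈ I. -/

import Mathlib

/-!
Minimum spanning trees satisfy the basis exchange property: if `A`, `B` are MSTs and `e ∈ A \ B`,
some `f ∈ B \ A` makes `A - e + f` an MST. Spanning trees satisfy the symmetric version, in which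
`A - e + f` and `B - f + e` are both spanning trees: take for `f` an edge of the `B`-path joining
the ends of `e` that crosses the cut of `A - e` (`IsSpanningTree.symm_exchange`). Optimality of `B`
against `B - f + e` then gives `w f ≤ w e`, so `A - e + f` is no heavier than `A`
(`IsMST.exchange`).

For augmentation, let `S₁ ⊆ T₁` and `S₂ ⊆ T₂` with `T₁`, `T₂` MSTs, and choose `T₂` to maximize
`|T₁ ∩ T₂|`. An element of `T₂ \ S₂` outside `T₁` could be exchanged for one of `T₁ \ T₂`, so
maximality gives `T₂ \ S₂ ⊆ T₁`. If no element of `S₁ \ S₂` lay in `T₂`, then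
`T₂ \ S₂ ⊆ T₁ \ S₁`, and `|T₁| = |T₂|` would force `|S₁| ≤ |S₂|`.
-/

open Finset
open scoped Classical

noncomputable section

variable {V : Type*}

/-- A spanning tree of `G`, as a finite set of edges: a subset of the edge set of `G`
whose induced subgraph is a (spanning) tree. -/
def IsSpanningTree [Fintype V] (G : SimpleGraph V) (T : Finset (Sym2 V)) : Prop :=
  (T : Set (Sym2 V)) ⊆ G.edgeSet ∧ (SimpleGraph.fromEdgeSet (T : Set (Sym2 V))).IsTree

/-- `T` is a minimum spanning tree of `G` under weight function `w`. -/
def IsMST [Fintype V] (G : SimpleGraph V) (w : Sym2 V → NNReal) (T : Finset (Sym2 V)) : Prop :=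
  IsSpanningTree G T ∧
    ∀ T' : Finset (Sym2 V), IsSpanningTree G T' → ∑ e ∈ T, w e ≤ ∑ e ∈ T', w e


/-- The independence family defined by MSTs: `S` is independent iff some MST contains it. -/
def MSTInd [Fintype V] (G : SimpleGraph V) (w : Sym2 V → NNReal) (S : Finset (Sym2 V)) : Prop :=
  ∃ T : Finset (Sym2 V), IsMST G w T ∧ S ⊆ T

/-- Spanning trees are the acyclic edge sets with `|V| - 1` edges; in this form a swap of two
edges only requires a check of acyclicity. -/
lemma isSpanningTree_iff [Fintype V] {G : SimpleGraph V} (hG : G.Connected)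
    {T : Finset (Sym2 V)} :
    IsSpanningTree G T ↔ (T : Set (Sym2 V)) ⊆ G.edgeSet ∧
      (SimpleGraph.fromEdgeSet (T : Set (Sym2 V))).IsAcyclic ∧ T.card + 1 = Fintype.card V := by
  unfold IsSpanningTree
  refine and_congr_right fun hT => ?_
  have hle : SimpleGraph.fromEdgeSet (T : Set (Sym2 V)) ≤ G := by
    intro a b h
    exact hT ((SimpleGraph.fromEdgeSet_adj _).1 h).1
  have hes : (SimpleGraph.fromEdgeSet (T : Set (Sym2 V))).edgeSet = T := by
    rw [SimpleGraph.edgeSet_fromEdgeSet]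
    ext e
    refine ⟨fun h => h.1, fun h => ⟨h, fun hd => ?_⟩⟩
    exact G.not_isDiag_of_mem_edgeSet (hT h) hd
  constructor
  · intro h
    refine ⟨h.isAcyclic, ?_⟩
    have := (SimpleGraph.isTree_iff_connected_and_card.1 h).2
    rw [hes] at this
    simpa using this
  · rintro ⟨hac, hcard⟩
    -- A tree extending `T` has the same number of edges, hence equals `T`.
    obtain ⟨F, hTF, -, hF⟩ := hG.exists_isTree_le_of_le_of_isAcyclic hle hac
    have h1 := hF.card_edgeFinset
    have hsub : T ⊆ F.edgeFinset := by
      intro e he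
      rw [SimpleGraph.mem_edgeFinset]
      exact SimpleGraph.edgeSet_mono hTF (by rw [hes]; exact he)
    have heq : T = F.edgeFinset := Finset.eq_of_subset_of_card_le hsub (by omega)
    rw [heq]
    simpa using hF

lemma isAcyclic_insert {S : Finset (Sym2 V)} {u v : V}
    (hS : (SimpleGraph.fromEdgeSet (S : Set (Sym2 V))).IsAcyclic)
    (h : ¬ (SimpleGraph.fromEdgeSet (S : Set (Sym2 V))).Reachable u v) :
    (SimpleGraph.fromEdgeSet ((insert s(u, v) S : Finset (Sym2 V)) : Set (Sym2 V))).IsAcyclic := by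
  have := SimpleGraph.IsAcyclic.sup_edge_of_not_reachable h hS
  have heq : SimpleGraph.fromEdgeSet ((insert s(u, v) S : Finset (Sym2 V)) : Set (Sym2 V))
      = SimpleGraph.fromEdgeSet (S : Set (Sym2 V)) ⊔ SimpleGraph.edge u v := by
    rw [SimpleGraph.edge, ← SimpleGraph.fromEdgeSet_union, Finset.coe_insert, Set.insert_eq,
      Set.union_comm]
  rw [heq]
  exact this

lemma isSpanningTree_swap [Fintype V] {G : SimpleGraph V} (hG : G.Connected)
    {T : Finset (Sym2 V)} (hT : IsSpanningTree G T) {e : Sym2 V} (he : e ∈ T) {x y : V}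
    (hxy : G.Adj x y)
    (h : ¬ (SimpleGraph.fromEdgeSet ((T.erase e : Finset (Sym2 V)) : Set (Sym2 V))).Reachable x y) :
    IsSpanningTree G (insert s(x, y) (T.erase e)) := by
  rw [isSpanningTree_iff hG] at hT ⊢
  obtain ⟨h1, h2, h3⟩ := hT
  have hnot : s(x, y) ∉ T.erase e := fun hm => h
    (SimpleGraph.Adj.reachable ((SimpleGraph.fromEdgeSet_adj _).2 ⟨by exact_mod_cast hm, hxy.ne⟩))
  refine ⟨?_, isAcyclic_insert (h2.anti ?_) h, ?_⟩
  · intro f hf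
    rcases Finset.mem_insert.1 (Finset.mem_coe.1 hf) with rfl | hf
    · exact hxy
    · exact h1 (Finset.mem_of_mem_erase hf)
  · exact SimpleGraph.fromEdgeSet_mono (by exact_mod_cast Finset.erase_subset _ _)
  · rw [Finset.card_insert_of_notMem hnot, Finset.card_erase_add_one he, h3]

/-- In a forest, deleting an edge of the path from `u` to `v` separates `u` from `v`. -/
lemma not_reachable_erase {T : Finset (Sym2 V)}
    (hT : (SimpleGraph.fromEdgeSet (T : Set (Sym2 V))).IsAcyclic) {u v : V}
    {p : (SimpleGraph.fromEdgeSet (T : Set (Sym2 V))).Walk u v} (hp : p.IsPath)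
    {f : Sym2 V} (hf : f ∈ p.edges) :
    ¬ (SimpleGraph.fromEdgeSet ((T.erase f : Finset (Sym2 V)) : Set (Sym2 V))).Reachable u v := by
  intro h
  obtain ⟨q, hq⟩ := h.exists_isPath
  have hle : SimpleGraph.fromEdgeSet ((T.erase f : Finset (Sym2 V)) : Set (Sym2 V)) ≤
      SimpleGraph.fromEdgeSet (T : Set (Sym2 V)) :=
    SimpleGraph.fromEdgeSet_mono (by exact_mod_cast Finset.erase_subset _ _)
  have heq := congrArg Subtype.val ((hT.subsingleton_path u v).elim ⟨p, hp⟩ ⟨q.mapLe hle, hq.mapLe hle⟩)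
  simp only at heq
  rw [heq, SimpleGraph.Walk.edges_mapLe_eq_edges] at hf
  have := q.edges_subset_edgeSet hf
  rw [SimpleGraph.edgeSet_fromEdgeSet] at this
  simpa using this.1

lemma IsSpanningTree.symm_exchange [Fintype V] {G : SimpleGraph V} (hG : G.Connected)
    {A B : Finset (Sym2 V)} (hA : IsSpanningTree G A) (hB : IsSpanningTree G B)
    {e : Sym2 V} (heA : e ∈ A) (heB : e ∉ B) :
    ∃ f ∈ B, f ∉ A ∧ IsSpanningTree G (insert f (A.erase e)) ∧
      IsSpanningTree G (insert e (B.erase f)) := by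
  induction e with | _ u v
  have huv : G.Adj u v := hA.1 heA
  have hsep : ¬ (SimpleGraph.fromEdgeSet
      ((A.erase s(u, v) : Finset (Sym2 V)) : Set (Sym2 V))).Reachable u v :=
    not_reachable_erase hA.2.isAcyclic
      (SimpleGraph.Path.singleton ((SimpleGraph.fromEdgeSet_adj _).2 ⟨heA, huv.ne⟩)).2
      (by simp)
  obtain ⟨p, hp⟩ := hB.2.connected.exists_isPath u v
  -- The `B`-path leaves the component of `u` in `A - e` through the edge `d`.
  obtain ⟨d, hd, hd1, hd2⟩ := p.exists_boundary_dart
    {x | (SimpleGraph.fromEdgeSet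
      ((A.erase s(u, v) : Finset (Sym2 V)) : Set (Sym2 V))).Reachable u x}
    (SimpleGraph.Reachable.refl u) hsep
  have hfB : s(d.fst, d.snd) ∈ B := ((SimpleGraph.fromEdgeSet_adj _).1 d.adj).1
  have hxy : G.Adj d.fst d.snd := hB.1 hfB
  have hnr : ¬ (SimpleGraph.fromEdgeSet
      ((A.erase s(u, v) : Finset (Sym2 V)) : Set (Sym2 V))).Reachable d.fst d.snd :=
    fun h => hd2 (SimpleGraph.Reachable.trans hd1 h)
  have hfp : s(d.fst, d.snd) ∈ p.edges := List.mem_map_of_mem hd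
  refine ⟨s(d.fst, d.snd), hfB, fun hfA => hnr ?_, isSpanningTree_swap hG hA heA hxy hnr,
    isSpanningTree_swap hG hB hfB huv (not_reachable_erase hB.2.isAcyclic hp hfp)⟩
  refine SimpleGraph.Adj.reachable ((SimpleGraph.fromEdgeSet_adj _).2 ⟨?_, hxy.ne⟩)
  exact Finset.mem_coe.2 (Finset.mem_erase.2 ⟨fun h => heB (h ▸ hfB), hfA⟩)

lemma IsMST.exchange [Fintype V] {G : SimpleGraph V} (hG : G.Connected) {w : Sym2 V → NNReal}
    {A B : Finset (Sym2 V)} (hA : IsMST G w A) (hB : IsMST G w B)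
    {e : Sym2 V} (heA : e ∈ A) (heB : e ∉ B) :
    ∃ f ∈ B, f ∉ A ∧ IsMST G w (insert f (A.erase e)) := by
  obtain ⟨f, hfB, hfA, h1, h2⟩ := IsSpanningTree.symm_exchange hG hA.1 hB.1 heA heB
  refine ⟨f, hfB, hfA, h1, fun T' hT' => le_trans ?_ (hA.2 T' hT')⟩
  have hw := hB.2 _ h2
  rw [Finset.sum_insert (by simp [heB]), ← Finset.add_sum_erase B w hfB] at hw
  rw [Finset.sum_insert (by simp [hfA]), ← Finset.add_sum_erase A w heA]
  -- Optimality of `B` against `B - f + e` gives `w f ≤ w e`.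
  gcongr
  exact le_of_add_le_add_right hw

lemma exists_isMST [Fintype V] {G : SimpleGraph V} (hG : G.Connected) (w : Sym2 V → NNReal) :
    ∃ T, IsMST G w T := by
  obtain ⟨F, hFG, hF⟩ := hG.exists_isTree_le
  have hne : (Finset.univ.filter (fun T => IsSpanningTree G T)).Nonempty := by
    refine ⟨F.edgeFinset, Finset.mem_filter.2 ⟨Finset.mem_univ _, ?_, ?_⟩⟩
    · simpa using hFG
    · simpa using hF
  obtain ⟨T, hT, hmin⟩ := Finset.exists_min_image _ (fun T => ∑ e ∈ T, w e) hne
  exact ⟨T, (Finset.mem_filter.1 hT).2,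
    fun T' hT' => hmin T' (Finset.mem_filter.2 ⟨Finset.mem_univ _, hT'⟩)⟩

/-- The family `I = {S ⊆ E : S is contained in some MST of G under w}` is
the independence family of a matroid: it contains `∅`, is downward closed, and satisfies the
augmentation property. -/
theorem mst_family_is_matroid [Fintype V] (G : SimpleGraph V) (hG : G.Connected)
    (w : Sym2 V → NNReal) :
    MSTInd G w (∅ : Finset (Sym2 V)) ∧
    (∀ S T : Finset (Sym2 V), MSTInd G w S → T ⊆ S → MSTInd G w T) ∧
    (∀ S₁ S₂ : Finset (Sym2 V), MSTInd G w S₁ → MSTInd G w S₂ → S₂.card < S₁.card →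
      ∃ e ∈ S₁ \ S₂, MSTInd G w (insert e S₂)) := by
  refine ⟨?_, ?_, ?_⟩
  · obtain ⟨T, hT⟩ := exists_isMST hG w
    exact ⟨T, hT, Finset.empty_subset _⟩
  · rintro S T ⟨U, hU, hSU⟩ hTS
    exact ⟨U, hU, hTS.trans hSU⟩
  · rintro S₁ S₂ ⟨T₁, hT₁, hS₁⟩ ⟨T₀, hT₀, hS₀⟩ hcard
    obtain ⟨T₂, hT₂, hmax⟩ := Finset.exists_max_image
      (Finset.univ.filter (fun T => IsMST G w T ∧ S₂ ⊆ T)) (fun T => (T₁ ∩ T).card)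
      ⟨T₀, Finset.mem_filter.2 ⟨Finset.mem_univ _, hT₀, hS₀⟩⟩
    obtain ⟨-, hM, hS₂⟩ := Finset.mem_filter.1 hT₂
    have hsub : T₂ \ S₂ ⊆ T₁ := by
      intro b hb
      obtain ⟨hb2, hbS⟩ := Finset.mem_sdiff.1 hb
      by_contra hb1
      obtain ⟨f, hf1, hf2, hMf⟩ := IsMST.exchange hG hM hT₁ hb2 hb1
      have hle := hmax (insert f (T₂.erase b)) (Finset.mem_filter.2 ⟨Finset.mem_univ _, hMf,
        fun x hx => Finset.mem_insert_of_mem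
          (Finset.mem_erase.2 ⟨fun h => hbS (h ▸ hx), hS₂ hx⟩)⟩)
      have hlt : (T₁ ∩ T₂).card < (T₁ ∩ insert f (T₂.erase b)).card := by
        apply Finset.card_lt_card
        rw [Finset.ssubset_iff_of_subset]
        · exact ⟨f, by simp [hf1], by simp [hf2]⟩
        · intro x hx
          obtain ⟨hx1, hx2⟩ := Finset.mem_inter.1 hx
          have : x ≠ b := fun h => hb1 (h ▸ hx1)
          simp [hx1, hx2, this]
      omega
    by_contra hno
    push Not at hno
    have hsub' : T₂ \ S₂ ⊆ T₁ \ S₁ := by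
      intro b hb
      refine Finset.mem_sdiff.2 ⟨hsub hb, fun hb1 => ?_⟩
      obtain ⟨hb2, hbS⟩ := Finset.mem_sdiff.1 hb
      exact hno b (Finset.mem_sdiff.2 ⟨hb1, hbS⟩) ⟨T₂, hM, Finset.insert_subset hb2 hS₂⟩
    have hc := Finset.card_le_card hsub'
    rw [Finset.card_sdiff_of_subset hS₁, Finset.card_sdiff_of_subset hS₂] at hc
    have h1 := ((isSpanningTree_iff hG).1 hT₁.1).2.2
    have h2 := ((isSpanningTree_iff hG).1 hM.1).2.2
    have h3 := Finset.card_le_card hS₁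
    have h4 := Finset.card_le_card hS₂
    omega
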